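/- arXiv:2306.14998 — 2 statements merged into one kernel-verified Lean document; each statement's English description precedes it below -/
import Mathlib

section
/- Let c_0 be the unique solution of log(x)/x = −1/2 on the positive reals (c_0 ≈ 0.7). For every r ≥ 1, every n ≥ 1 and every x > 0, P_P( θ_r(P;X_n) − E_P[θ_r(P;X_n)] ≥ √(2 v_n(P) x) + [2·max(c_0/2, x + log n)/n]^r · (2x/3) ) ≤ 2 e^{−x}. -/
open MeasureTheory ProbabilityTheory Real Filter

noncomputable section

/-- The law of an i.i.d. sample of size `n` from the discrete distribution `P` on `ℕ`. -/
def sampleMeasure (P : PMF ℕ) (n : ℕ) : Measure (Fin n → ℕ) :=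
  Measure.pi fun _ => P.toMeasure

/-- The probability mass of symbol `j` under `P`, as a real number. -/
def pReal (P : PMF ℕ) (j : ℕ) : ℝ := (P j).toReal

/-- Empirical frequency of the symbol `j` in the sample `ω`. -/
def freq {n : ℕ} (ω : Fin n → ℕ) (j : ℕ) : ℕ :=
  (Finset.univ.filter fun i => ω i = j).card

/-- The `r`-order missing mass `θ_r(P; X_n)`. -/
def missingMass (p : ℕ → ℝ) (r : ℕ) {n : ℕ} (ω : Fin n → ℕ) : ℝ :=
  ∑' j, p j ^ r * (if freq ω j = 0 then 1 else 0)

/-- `v_n(P) = Σ_j p_j^{2r} (1 - p_j)^n`. -/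
def vnP (P : PMF ℕ) (r n : ℕ) : ℝ :=
  ∑' j, pReal P j ^ (2 * r) * (1 - pReal P j) ^ n

instance sampleMeasure_isProb (P : PMF ℕ) (n : ℕ) : IsProbabilityMeasure (sampleMeasure P n) := by
  unfold sampleMeasure; infer_instance

lemma pReal_nonneg (P : PMF ℕ) (j : ℕ) : 0 ≤ pReal P j := ENNReal.toReal_nonneg

lemma pReal_sum_eq (P : PMF ℕ) (S : Finset ℕ) :
    ∑ j ∈ S, P j = ENNReal.ofReal (∑ j ∈ S, pReal P j) := by
  rw [ENNReal.ofReal_sum_of_nonneg (fun j _ => pReal_nonneg P j)]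
  refine Finset.sum_congr rfl fun j _ => ?_
  rw [pReal, ENNReal.ofReal_toReal (P.apply_ne_top j)]

lemma pReal_sum_le_one (P : PMF ℕ) (S : Finset ℕ) : ∑ j ∈ S, pReal P j ≤ 1 := by
  have h := P.toMeasure_apply_finset S
  rw [pReal_sum_eq] at h
  have h2 : P.toMeasure (S : Set ℕ) ≤ 1 := prob_le_one
  rw [h] at h2
  simpa using h2

lemma pReal_le_one (P : PMF ℕ) (j : ℕ) : pReal P j ≤ 1 := by
  simpa using pReal_sum_le_one P {j}

lemma pReal_summable (P : PMF ℕ) : Summable (pReal P) :=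
  summable_of_sum_le (pReal_nonneg P) (pReal_sum_le_one P)

/-- indicator of the symbol being unseen -/
def unseen {n : ℕ} (ω : Fin n → ℕ) (j : ℕ) : ℝ := if freq ω j = 0 then 1 else 0

lemma unseen_nonneg {n : ℕ} (ω : Fin n → ℕ) (j : ℕ) : 0 ≤ unseen ω j := by
  unfold unseen; split_ifs <;> norm_num

lemma unseen_le_one {n : ℕ} (ω : Fin n → ℕ) (j : ℕ) : unseen ω j ≤ 1 := by
  unfold unseen; split_ifs <;> norm_num

lemma freq_eq_zero {n : ℕ} (ω : Fin n → ℕ) (j : ℕ) : freq ω j = 0 ↔ ∀ i, ω i ≠ j := by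
  simp [freq, Finset.filter_eq_empty_iff]

lemma measure_unseen (P : PMF ℕ) (n : ℕ) (S : Finset ℕ) :
    sampleMeasure P n {ω | ∀ j ∈ S, freq ω j = 0}
      = ENNReal.ofReal ((1 - ∑ j ∈ S, pReal P j) ^ n) := by
  have h : {ω : Fin n → ℕ | ∀ j ∈ S, freq ω j = 0}
      = Set.pi Set.univ (fun _ => (S : Set ℕ)ᶜ) := by
    ext ω
    simp only [Set.mem_ofPred_eq, freq_eq_zero, Set.mem_pi, Set.mem_univ, true_imp_iff,
      Set.mem_compl_iff, Finset.mem_coe]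
    constructor
    · intro h i hi
      exact h _ hi i rfl
    · rintro h j hj i rfl
      exact h i hj
  rw [h, sampleMeasure, Measure.pi_pi]
  rw [prob_compl_eq_one_sub (Set.Finite.measurableSet S.finite_toSet),
    P.toMeasure_apply_finset, pReal_sum_eq]
  simp only [Finset.prod_const, Finset.card_univ, Fintype.card_fin]
  rw [ENNReal.ofReal_pow (by linarith [pReal_sum_le_one P S]),
    ENNReal.ofReal_sub _ (Finset.sum_nonneg fun j _ => pReal_nonneg P j), ENNReal.ofReal_one]

lemma integrable_of_bdd (P : PMF ℕ) (n : ℕ) (f : (Fin n → ℕ) → ℝ) (C : ℝ)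
    (hf : ∀ ω, |f ω| ≤ C) : Integrable f (sampleMeasure P n) :=
  Integrable.of_bound (Measurable.of_discrete).aestronglyMeasurable C
    (Eventually.of_forall hf)

lemma integral_prod_unseen (P : PMF ℕ) (n : ℕ) (S : Finset ℕ) :
    ∫ ω, ∏ j ∈ S, unseen ω j ∂ sampleMeasure P n = (1 - ∑ j ∈ S, pReal P j) ^ n := by
  have h : (fun ω : Fin n → ℕ => ∏ j ∈ S, unseen ω j)
      = Set.indicator {ω | ∀ j ∈ S, freq ω j = 0} 1 := by
    ext ω
    classical
    simp only [unseen, Finset.prod_ite_zero, Set.indicator, Set.mem_ofPred_eq]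
    simp
  rw [h, integral_indicator_one (MeasurableSet.of_discrete), Measure.real, measure_unseen,
    ENNReal.toReal_ofReal]
  exact pow_nonneg (by linarith [pReal_sum_le_one P S]) _

lemma weierstrass (p : ℕ → ℝ) (h0 : ∀ j, 0 ≤ p j) (h1 : ∀ j, p j ≤ 1) (S : Finset ℕ) :
    1 - ∑ j ∈ S, p j ≤ ∏ j ∈ S, (1 - p j) := by
  induction S using Finset.induction_on with
  | empty => simp
  | insert a S ha ih =>
    rw [Finset.sum_insert ha, Finset.prod_insert ha]
    have := mul_le_mul_of_nonneg_left ih (sub_nonneg.2 (h1 a))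
    have h3 := mul_nonneg (h0 a) (Finset.sum_nonneg fun j (_ : j ∈ S) => h0 j)
    linarith

lemma prod_unseen_abs {n : ℕ} (ω : Fin n → ℕ) (S : Finset ℕ) :
    |∏ j ∈ S, unseen ω j| ≤ 1 := by
  rw [abs_of_nonneg (Finset.prod_nonneg fun j _ => unseen_nonneg ω j)]
  exact Finset.prod_le_one (fun j _ => unseen_nonneg ω j) (fun j _ => unseen_le_one ω j)

lemma neg_assoc (P : PMF ℕ) (n : ℕ) (b : ℕ → ℝ) (hb : ∀ j, 0 ≤ b j) (J : Finset ℕ) :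
    ∫ ω, ∏ j ∈ J, (1 + b j * unseen ω j) ∂ sampleMeasure P n
      ≤ ∏ j ∈ J, (1 + b j * (1 - pReal P j) ^ n) := by
  simp only [Finset.prod_one_add, Finset.prod_mul_distrib]
  rw [integral_finsetSum]
  · refine Finset.sum_le_sum fun S _ => ?_
    rw [integral_const_mul, integral_prod_unseen, Finset.prod_pow]
    refine mul_le_mul_of_nonneg_left ?_ (Finset.prod_nonneg fun j _ => hb j)
    exact pow_le_pow_left₀ (by linarith [pReal_sum_le_one P S])
      (weierstrass _ (pReal_nonneg P) (pReal_le_one P) S) n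
  · intro S _
    exact (integrable_of_bdd P n _ 1 fun ω => prod_unseen_abs ω S).const_mul _

lemma exp_bound (y : ℝ) (h0 : 0 ≤ y) (h3 : y < 3) :
    Real.exp y - 1 - y ≤ y ^ 2 / (2 * (1 - y / 3)) := by
  have hs : HasSum (fun k : ℕ => y ^ k / (k.factorial : ℝ)) (Real.exp y) := by
    rw [Real.exp_eq_exp_ℝ]
    exact NormedSpace.expSeries_div_hasSum_exp y
  have hs2 := (hasSum_nat_add_iff' 2).2 hs
  have hg : HasSum (fun k : ℕ => y ^ 2 / 2 * (y / 3) ^ k) (y ^ 2 / 2 * (1 - y / 3)⁻¹) :=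
    (hasSum_geometric_of_lt_one (by positivity) (by linarith)).mul_left _
  have := hasSum_le (fun k => ?_) hs2 hg
  · simp only [Finset.sum_range_succ, Finset.sum_range_zero] at this
    have e : y ^ 2 / (2 * (1 - y / 3)) = y ^ 2 / 2 * (1 - y / 3)⁻¹ := by
      rw [div_mul_eq_div_div, div_eq_mul_inv (y ^ 2 / 2)]
    rw [e]
    norm_num at this ⊢
    linarith
  · have hf : (2 * 3 ^ k : ℝ) ≤ ((k + 2).factorial : ℝ) := by
      have := @Nat.factorial_mul_pow_le_factorial 2 k
      rw [add_comm k 2]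
      exact_mod_cast this
    rw [div_pow, div_mul_div_comm, ← pow_add, add_comm 2 k]
    exact div_le_div_of_nonneg_left (by positivity) (by positivity) hf

lemma mgf_fin (P : PMF ℕ) (n : ℕ) (a : ℕ → ℝ) (ha : ∀ j, 0 ≤ a j) (M : ℝ) (haM : ∀ j, a j ≤ M)
    (l : ℝ) (hl : 0 ≤ l) (hlM : l * M < 3) (J : Finset ℕ) :
    ∫ ω, Real.exp (l * ∑ j ∈ J, a j * unseen ω j) ∂ sampleMeasure P n
      ≤ Real.exp (l * ∑ j ∈ J, a j * (1 - pReal P j) ^ n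
          + l ^ 2 / (2 * (1 - l * M / 3)) * ∑ j ∈ J, a j ^ 2 * (1 - pReal P j) ^ n) := by
  have hq : ∀ j, 0 ≤ (1 - pReal P j) ^ n := fun j =>
    pow_nonneg (by linarith [pReal_le_one P j]) n
  have hb : ∀ j, 0 ≤ Real.exp (l * a j) - 1 := fun j => by
    have := Real.one_le_exp (mul_nonneg hl (ha j)); linarith
  have e : ∀ ω : Fin n → ℕ, Real.exp (l * ∑ j ∈ J, a j * unseen ω j)
      = ∏ j ∈ J, (1 + (Real.exp (l * a j) - 1) * unseen ω j) := by
    intro ω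
    rw [Finset.mul_sum, Real.exp_sum]
    refine Finset.prod_congr rfl fun j _ => ?_
    unfold unseen
    split_ifs <;> simp
  simp only [e]
  refine (neg_assoc P n _ hb J).trans ((Real.prod_one_add_le_exp_sum J
    (fun j => mul_nonneg (hb j) (hq j))).trans (Real.exp_le_exp.2 ?_))
  rw [Finset.mul_sum, Finset.mul_sum, ← Finset.sum_add_distrib]
  refine Finset.sum_le_sum fun j _ => ?_
  have hj : l * a j ≤ l * M := mul_le_mul_of_nonneg_left (haM j) hl
  have h1 := exp_bound (l * a j) (mul_nonneg hl (ha j)) (by linarith)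
  have h2 : (l * a j) ^ 2 / (2 * (1 - l * a j / 3)) ≤ (l * a j) ^ 2 / (2 * (1 - l * M / 3)) :=
    div_le_div_of_nonneg_left (by positivity) (by linarith) (by linarith)
  have h3 : Real.exp (l * a j) - 1 ≤ l * a j + l ^ 2 / (2 * (1 - l * M / 3)) * a j ^ 2 := by
    have : l ^ 2 / (2 * (1 - l * M / 3)) * a j ^ 2 = (l * a j) ^ 2 / (2 * (1 - l * M / 3)) := by
      ring
    linarith
  have := mul_le_mul_of_nonneg_right h3 (hq j)
  linarith

lemma summable_unseen (P : PMF ℕ) {n : ℕ} (a : ℕ → ℝ) (ha : ∀ j, 0 ≤ a j)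
    (hap : ∀ j, a j ≤ pReal P j) (ω : Fin n → ℕ) : Summable fun j => a j * unseen ω j :=
  Summable.of_nonneg_of_le (fun j => mul_nonneg (ha j) (unseen_nonneg ω j))
    (fun j => (mul_le_of_le_one_right (ha j) (unseen_le_one ω j)).trans (hap j))
    (pReal_summable P)

lemma sum_unseen_le_one (P : PMF ℕ) {n : ℕ} (a : ℕ → ℝ) (ha : ∀ j, 0 ≤ a j)
    (hap : ∀ j, a j ≤ pReal P j) (ω : Fin n → ℕ) (J : Finset ℕ) :
    ∑ j ∈ J, a j * unseen ω j ≤ 1 :=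
  (Finset.sum_le_sum fun j _ =>
    (mul_le_of_le_one_right (ha j) (unseen_le_one ω j)).trans (hap j)).trans
    (pReal_sum_le_one P J)

lemma mgf_inf (P : PMF ℕ) (n : ℕ) (a : ℕ → ℝ) (ha : ∀ j, 0 ≤ a j)
    (hap : ∀ j, a j ≤ pReal P j) (l K : ℝ) (hl : 0 ≤ l)
    (h : ∀ J : Finset ℕ, ∫ ω, Real.exp (l * ∑ j ∈ J, a j * unseen ω j) ∂ sampleMeasure P n ≤ K) :
    ∫ ω, Real.exp (l * ∑' j, a j * unseen ω j) ∂ sampleMeasure P n ≤ K := by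
  refine le_of_tendsto' (tendsto_integral_of_dominated_convergence
    (F := fun (N : ℕ) ω => Real.exp (l * ∑ j ∈ Finset.range N, a j * unseen ω j))
    (fun _ => Real.exp l) (fun N => (Measurable.of_discrete).aestronglyMeasurable)
    (integrable_const _) (fun N => Eventually.of_forall fun ω => ?_)
    (Eventually.of_forall fun ω => ?_)) (fun N => h (Finset.range N))
  · rw [Real.norm_of_nonneg (Real.exp_pos _).le, Real.exp_le_exp]
    exact mul_le_of_le_one_right hl (sum_unseen_le_one P a ha hap ω _)
  · exact (Real.continuous_exp.tendsto _).comp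
      (((summable_unseen P a ha hap ω).hasSum.tendsto_sum_nat).const_mul l)

lemma missingMass_eq (p : ℕ → ℝ) (r : ℕ) {n : ℕ} (ω : Fin n → ℕ) :
    missingMass p r ω = ∑' j, p j ^ r * unseen ω j := rfl

lemma pow_pReal_le (P : PMF ℕ) (r : ℕ) (hr : 1 ≤ r) (j : ℕ) : pReal P j ^ r ≤ pReal P j :=
  pow_le_of_le_one (pReal_nonneg P j) (pReal_le_one P j) (by omega)

lemma integral_missingMass_ge (P : PMF ℕ) (r n : ℕ) (hr : 1 ≤ r) (a : ℕ → ℝ)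
    (hap : ∀ j, a j ≤ pReal P j ^ r) (J : Finset ℕ) :
    ∑ j ∈ J, a j * (1 - pReal P j) ^ n
      ≤ ∫ ω, missingMass (pReal P) r ω ∂ sampleMeasure P n := by
  have hp0 : ∀ j, 0 ≤ pReal P j ^ r := fun j => pow_nonneg (pReal_nonneg P j) r
  have hI : ∀ j, Integrable (fun ω : Fin n → ℕ => a j * unseen ω j) (sampleMeasure P n) :=
    fun j => (integrable_of_bdd P n _ 1 fun ω => by
      rw [abs_of_nonneg (unseen_nonneg ω j)]; exact unseen_le_one ω j).const_mul _
  have h1 : ∑ j ∈ J, a j * (1 - pReal P j) ^ n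
      = ∫ ω, ∑ j ∈ J, a j * unseen ω j ∂ sampleMeasure P n := by
    rw [integral_finsetSum _ fun j _ => hI j]
    refine Finset.sum_congr rfl fun j _ => ?_
    rw [integral_const_mul]
    have := integral_prod_unseen P n {j}
    simp only [Finset.prod_singleton, Finset.sum_singleton] at this
    rw [this]
  rw [h1]
  refine integral_mono (integrable_finsetSum _ fun j _ => hI j)
    (integrable_of_bdd P n _ 1 fun ω => ?_) fun ω => ?_
  · rw [missingMass_eq, abs_of_nonneg (tsum_nonneg fun j =>
      mul_nonneg (hp0 j) (unseen_nonneg ω j))]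
    exact (summable_unseen P _ hp0 (pow_pReal_le P r hr) ω).tsum_le_of_sum_le
      fun J => sum_unseen_le_one P _ hp0 (pow_pReal_le P r hr) ω J
  · simp only [missingMass_eq]
    refine (Finset.sum_le_sum fun j _ =>
      mul_le_mul_of_nonneg_right (hap j) (unseen_nonneg ω j)).trans ?_
    exact (summable_unseen P _ hp0 (pow_pReal_le P r hr) ω).sum_le_tsum J
      fun j _ => mul_nonneg (hp0 j) (unseen_nonneg ω j)

/-- Bernstein bound for the truncated missing mass. -/
lemma bernstein_trunc (P : PMF ℕ) (r n : ℕ) (hr : 1 ≤ r) (a : ℕ → ℝ) (ha : ∀ j, 0 ≤ a j)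
    (hap : ∀ j, a j ≤ pReal P j ^ r) (M : ℝ) (hM : 0 < M) (haM : ∀ j, a j ≤ M)
    (x : ℝ) (hx : 0 < x) :
    sampleMeasure P n {ω | (∫ ω', missingMass (pReal P) r ω' ∂ sampleMeasure P n)
        + (Real.sqrt (2 * vnP P r n * x) + M * (2 * x / 3)) ≤ ∑' j, a j * unseen ω j}
      ≤ ENNReal.ofReal (Real.exp (-x)) := by
  set E := ∫ ω', missingMass (pReal P) r ω' ∂ sampleMeasure P n with hE
  set v := vnP P r n with hv
  have hq : ∀ j, 0 ≤ (1 - pReal P j) ^ n := fun j =>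
    pow_nonneg (by linarith [pReal_le_one P j]) n
  have hq1 : ∀ j, (1 - pReal P j) ^ n ≤ 1 := fun j =>
    pow_le_one₀ (by linarith [pReal_le_one P j]) (by linarith [pReal_nonneg P j])
  have hterm : ∀ j, 0 ≤ pReal P j ^ (2 * r) * (1 - pReal P j) ^ n := fun j =>
    mul_nonneg (pow_nonneg (pReal_nonneg P j) _) (hq j)
  have hvs : Summable fun j => pReal P j ^ (2 * r) * (1 - pReal P j) ^ n :=
    Summable.of_nonneg_of_le hterm
      (fun j => (mul_le_of_le_one_right (pow_nonneg (pReal_nonneg P j) _) (hq1 j)).trans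
        (pow_pReal_le P (2 * r) (by omega) j)) (pReal_summable P)
  have hv0 : 0 ≤ v := tsum_nonneg hterm
  have hvJ : ∀ J : Finset ℕ, ∑ j ∈ J, a j ^ 2 * (1 - pReal P j) ^ n ≤ v := by
    intro J
    refine (Finset.sum_le_sum fun j _ => ?_).trans (hvs.sum_le_tsum J fun j _ => hterm j)
    refine mul_le_mul_of_nonneg_right ?_ (hq j)
    rw [mul_comm 2 r, pow_mul]
    exact pow_le_pow_left₀ (ha j) (hap j) 2
  -- choose the parameter
  obtain ⟨s, hs0, hs⟩ : ∃ s : ℝ, 0 ≤ s ∧ v = 2 * x * s ^ 2 :=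
    ⟨Real.sqrt (v / (2 * x)), Real.sqrt_nonneg _, by
      rw [Real.sq_sqrt (by positivity)]; field_simp⟩
  have hsq : Real.sqrt (2 * v * x) = 2 * x * s := by
    rw [hs, show 2 * (2 * x * s ^ 2) * x = (2 * x * s) ^ 2 by ring,
      Real.sqrt_sq (by positivity)]
  set l : ℝ := 1 / (2 * M / 3 + s) with hldef
  have hD : 0 < 2 * M / 3 + s := by positivity
  have hl : 0 < l := by positivity
  have hlD : l * (2 * M / 3 + s) = 1 := by rw [hldef]; field_simp
  have hlM : l * M < 3 := by nlinarith [mul_nonneg hl.le hs0]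
  have h1 : 1 - l * M / 3 = l * (M / 3 + s) := by linarith
  have hMs : 0 < M / 3 + s := by positivity
  have hK : l ^ 2 / (2 * (1 - l * M / 3)) * v ≤ x * s * l := by
    rw [h1, hs]
    have : l ^ 2 / (2 * (l * (M / 3 + s))) * (2 * x * s ^ 2) = x * s * l * (s / (M / 3 + s)) := by
      field_simp
    rw [this]
    refine mul_le_of_le_one_right (by positivity) ?_
    rw [div_le_one hMs]; linarith
  have hpos : 0 ≤ l ^ 2 / (2 * (1 - l * M / 3)) := by
    rw [h1]; positivity
  have hmgf : ∫ ω, Real.exp (l * ∑' j, a j * unseen ω j) ∂ sampleMeasure P n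
      ≤ Real.exp (l * E + x * s * l) := by
    refine mgf_inf P n a ha (fun j => (hap j).trans (pow_pReal_le P r hr j)) l _ hl.le fun J => ?_
    refine (mgf_fin P n a ha M haM l hl.le hlM J).trans (Real.exp_le_exp.2 ?_)
    have := mul_le_mul_of_nonneg_left (integral_missingMass_ge P r n hr a hap J) hl.le
    have := mul_le_mul_of_nonneg_left (hvJ J) hpos
    linarith
  have hint : Integrable (fun ω : Fin n → ℕ => Real.exp (l * ∑' j, a j * unseen ω j))
      (sampleMeasure P n) := by
    refine integrable_of_bdd P n _ (Real.exp l) fun ω => ?_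
    rw [abs_of_pos (Real.exp_pos _), Real.exp_le_exp]
    refine mul_le_of_le_one_right hl.le ?_
    have hap' := fun j => (hap j).trans (pow_pReal_le P r hr j)
    exact (summable_unseen P _ ha hap' ω).tsum_le_of_sum_le
      fun J => sum_unseen_le_one P _ ha hap' ω J
  have hch := measure_ge_le_exp_mul_mgf (μ := sampleMeasure P n)
    (X := fun ω => ∑' j, a j * unseen ω j)
    (E + (Real.sqrt (2 * v * x) + M * (2 * x / 3))) hl.le hint
  rw [← ofReal_measureReal]
  refine ENNReal.ofReal_le_ofReal (hch.trans ?_)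
  refine (mul_le_mul_of_nonneg_left hmgf (Real.exp_pos _).le).trans ?_
  rw [← Real.exp_add, Real.exp_le_exp, hsq]
  have : x * (l * (2 * M / 3 + s)) = x := by rw [hlD, mul_one]
  linarith

lemma tail_calc (n : ℕ) (hn : 1 ≤ n) (c₀ : ℝ) (hc₀ : 0 < c₀)
    (hc₀' : Real.log c₀ / c₀ = -(1/2)) (x c : ℝ)
    (hc : c = 2 * max (c₀ / 2) (x + Real.log n) / n) :
    0 < c ∧ Real.exp (-(n * c)) / c ≤ Real.exp (-x) := by
  have hn0 : (0 : ℝ) < n := by exact_mod_cast hn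
  set y := 2 * max (c₀ / 2) (x + Real.log n) with hy
  have hyc : c₀ ≤ y := by have := le_max_left (c₀ / 2) (x + Real.log n); linarith
  have hyx : 2 * (x + Real.log n) ≤ y := by
    have := le_max_right (c₀ / 2) (x + Real.log n); linarith
  have hy0 : 0 < y := by linarith
  have hcpos : 0 < c := by rw [hc]; positivity
  refine ⟨hcpos, ?_⟩
  have hnc : n * c = y := by rw [hc]; field_simp
  have hlog : -(y / 2) ≤ Real.log y := by
    have h1 : Real.log c₀ = -(1/2) * c₀ := by rw [← hc₀']; field_simp
    have h2 := Real.log_le_log hc₀ hyc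
    linarith
  have hlc : Real.log y - Real.log n = Real.log c := by
    rw [hc, Real.log_div hy0.ne' hn0.ne']
  rw [hnc]
  conv_lhs => rw [← Real.exp_log hcpos, ← Real.exp_sub]
  rw [Real.exp_le_exp]
  linarith

lemma big_seen (P : PMF ℕ) (n : ℕ) (c : ℝ) (hc : 0 < c) :
    sampleMeasure P n {ω | ∃ j, c < pReal P j ∧ freq ω j = 0}
      ≤ ENNReal.ofReal (Real.exp (-(n * c)) / c) := by
  have h : {ω : Fin n → ℕ | ∃ j, c < pReal P j ∧ freq ω j = 0}
      = ⋃ j, {ω | c < pReal P j ∧ freq ω j = 0} := by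
    ext ω; simp
  rw [h]
  refine (measure_iUnion_le _).trans ?_
  have key : ∀ j, sampleMeasure P n {ω | c < pReal P j ∧ freq ω j = 0}
      ≤ P j * ENNReal.ofReal (Real.exp (-(n * c)) / c) := by
    intro j
    by_cases hj : c < pReal P j
    · have h1 := measure_unseen P n {j}
      simp only [Finset.mem_singleton, forall_eq, Finset.sum_singleton] at h1
      simp only [hj, true_and]
      rw [h1]
      have hPj : P j = ENNReal.ofReal (pReal P j) := by
        rw [pReal, ENNReal.ofReal_toReal (P.apply_ne_top j)]
      rw [hPj, ← ENNReal.ofReal_mul (pReal_nonneg P j)]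
      refine ENNReal.ofReal_le_ofReal ?_
      have h2 : (1 - pReal P j) ^ n ≤ Real.exp (-(n * c)) := by
        have h3 : 1 - pReal P j ≤ Real.exp (-c) := by
          have := Real.add_one_le_exp (-c); linarith
        refine (pow_le_pow_left₀ (by linarith [pReal_le_one P j]) h3 n).trans ?_
        rw [← Real.exp_nat_mul]
        apply le_of_eq; congr 1; ring
      have h4 : 1 ≤ pReal P j / c := by rw [one_le_div hc]; exact hj.le
      calc (1 - pReal P j) ^ n ≤ Real.exp (-(n * c)) := h2
        _ ≤ pReal P j / c * Real.exp (-(n * c)) :=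
          le_mul_of_one_le_left (Real.exp_pos _).le h4
        _ = pReal P j * (Real.exp (-(n * c)) / c) := by ring
    · simp [hj]
  refine (ENNReal.tsum_le_tsum key).trans ?_
  rw [ENNReal.tsum_mul_right, P.tsum_coe, one_mul]

/-- Right-tail concentration inequality for the `r`-order missing mass, where `c₀` is the
unique positive solution of `log x / x = -1/2`. -/
theorem missingMass_right_tail (P : PMF ℕ) (r n : ℕ) (hr : 1 ≤ r) (hn : 1 ≤ n)
    (c₀ : ℝ) (hc₀ : 0 < c₀) (hc₀' : Real.log c₀ / c₀ = -(1/2))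
    (x : ℝ) (hx : 0 < x) :
    sampleMeasure P n
      {ω | missingMass (pReal P) r ω -
            (∫ ω', missingMass (pReal P) r ω' ∂ sampleMeasure P n)
          ≥ Real.sqrt (2 * vnP P r n * x)
            + (2 * max (c₀ / 2) (x + Real.log n) / n) ^ r * (2 * x / 3)}
      ≤ ENNReal.ofReal (2 * Real.exp (-x)) := by
  obtain ⟨hc, htail⟩ := tail_calc n hn c₀ hc₀ hc₀' x _ rfl
  set c := 2 * max (c₀ / 2) (x + Real.log n) / n with hcdef
  classical
  set a : ℕ → ℝ := fun j => if pReal P j ≤ c then pReal P j ^ r else 0 with hadef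
  have hp0 : ∀ j, 0 ≤ pReal P j ^ r := fun j => pow_nonneg (pReal_nonneg P j) r
  have ha : ∀ j, 0 ≤ a j := fun j => by
    simp only [hadef]; split_ifs
    · exact hp0 j
    · exact le_rfl
  have hap : ∀ j, a j ≤ pReal P j ^ r := fun j => by
    simp only [hadef]; split_ifs
    · exact le_rfl
    · exact hp0 j
  have haM : ∀ j, a j ≤ c ^ r := fun j => by
    simp only [hadef]; split_ifs with h
    · exact pow_le_pow_left₀ (pReal_nonneg P j) h r
    · positivity
  have hB := bernstein_trunc P r n hr a ha hap (c ^ r) (by positivity) haM x hx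
  have hS := (big_seen P n c hc).trans (ENNReal.ofReal_le_ofReal htail)
  rw [two_mul (Real.exp (-x)), ENNReal.ofReal_add (Real.exp_pos _).le (Real.exp_pos _).le]
  refine (measure_mono ?_).trans ((measure_union_le _ _).trans (add_le_add hB hS))
  intro ω hω
  by_cases hbad : ∃ j, c < pReal P j ∧ freq ω j = 0
  · exact Or.inr hbad
  · left
    push Not at hbad
    have he : missingMass (pReal P) r ω = ∑' j, a j * unseen ω j := by
      rw [missingMass_eq]
      refine tsum_congr fun j => ?_
      by_cases hj : pReal P j ≤ c
      · simp [hadef, hj]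
      · have := hbad j (not_le.1 hj)
        simp [hadef, hj, unseen, this]
    simp only [Set.mem_ofPred_eq, ge_iff_le] at hω ⊢
    rw [← he]
    linarith

end
end

section
/- Suppose n > 2r. Define the upper confidence bound U_{n,r}(x) = θ̂_r^{GT}(X_n) + [√(2/C(n,2r)) + 2√2/C(n,r)]·√(C_{n,r}·x) + [4/√C(n,2r) + (26/3)/C(n,r)]·x + ((x + log n)/n)^r · 2^{r+1}·x/3, where C(n,k) denotes the binomial coefficient. Then for every x > 0, with probability at least 1 − 7e^{−x} under P, θ_r(P;X_n) ≤ min(U_{n,r}(x), 1). -/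
open MeasureTheory ProbabilityTheory Real Filter

noncomputable section

/-- `M_{n,r}`: the number of distinct symbols appearing exactly `r` times in the sample. -/
def Mcount {n : ℕ} (ω : Fin n → ℕ) (r : ℕ) : ℝ :=
  ∑' j, if freq ω j = r then 1 else 0

/-- `C_{n,r}`: the number of distinct symbols appearing at least `r` times in the sample. -/
def Ccount {n : ℕ} (ω : Fin n → ℕ) (r : ℕ) : ℝ :=
  ∑' j, if r ≤ freq ω j then 1 else 0

/-- The Good–Turing-type estimator `θ̂_r^{GT}(X_n) = M_{n,r} / (n choose r)`. -/
def gtEst {n : ℕ} (ω : Fin n → ℕ) (r : ℕ) : ℝ := Mcount ω r / (n.choose r)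

/-- The upper confidence bound `𝔘_{n,r}(x)`. -/
def Ubound {n : ℕ} (r : ℕ) (x : ℝ) (ω : Fin n → ℕ) : ℝ :=
  gtEst ω r
    + (Real.sqrt (2 / (n.choose (2 * r))) + 2 * Real.sqrt 2 / (n.choose r))
        * Real.sqrt (Ccount ω r * x)
    + (4 / Real.sqrt (n.choose (2 * r)) + (26 / 3) / (n.choose r)) * x
    + ((x + Real.log n) / n) ^ r * (2 ^ (r + 1) * x / 3)

instance sampleMeasure_prob (P : PMF ℕ) (n : ℕ) : IsProbabilityMeasure (sampleMeasure P n) := by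
  unfold sampleMeasure
  infer_instance

lemma integrable_of_bdd_s3 {α : Type*} [MeasurableSpace α] [DiscreteMeasurableSpace α]
    [Countable α] (μ : Measure α) [IsProbabilityMeasure μ] (f : α → ℝ)
    (hf : ∃ B, ∀ a, |f a| ≤ B) : Integrable f μ := by
  obtain ⟨B, hB⟩ := hf
  exact Integrable.of_bound (Measurable.of_discrete.aestronglyMeasurable) B
    (Filter.Eventually.of_forall hB)

lemma bdd_mul {α : Type*} {f g : α → ℝ} (hf : ∃ B, ∀ a, |f a| ≤ B) (hg : ∃ B, ∀ a, |g a| ≤ B) :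
    ∃ B, ∀ a, |f a * g a| ≤ B := by
  obtain ⟨B, hB⟩ := hf
  obtain ⟨C, hC⟩ := hg
  refine ⟨B * C, fun a => ?_⟩
  rw [abs_mul]
  exact mul_le_mul (hB a) (hC a) (abs_nonneg _) ((abs_nonneg _).trans (hB a))

lemma cov_one (ν : Measure ℕ) [IsProbabilityMeasure ν] (A : Set ℕ) (f g : ℕ → ℝ)
    (hf : ∃ B, ∀ a, |f a| ≤ B) (hg : ∃ B, ∀ a, |g a| ≤ B)
    (mf : ∀ a b, a ∉ A → f a ≤ f b) (mg : ∀ a b, a ∈ A → g a ≤ g b) :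
    ∫ a, f a * g a ∂ν ≤ (∫ a, f a ∂ν) * ∫ a, g a ∂ν := by
  have If := integrable_of_bdd_s3 ν f hf
  have Ig := integrable_of_bdd_s3 ν g hg
  by_cases h1 : ∃ a, a ∉ A
  · by_cases h2 : ∃ b, b ∈ A
    · obtain ⟨a0, ha0⟩ := h1
      obtain ⟨b0, hb0⟩ := h2
      have e : ∀ a, f a * g a = f a0 * g a + g b0 * f a - f a0 * g b0 := by
        intro a
        by_cases ha : a ∈ A
        · have : g a = g b0 := le_antisymm (mg _ _ ha) (mg _ _ hb0)
          rw [this]; ring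
        · have : f a = f a0 := le_antisymm (mf _ _ ha) (mf _ _ ha0)
          rw [this]; ring
      have e2 : ∫ a, f a * g a ∂ν = f a0 * ∫ a, g a ∂ν + g b0 * ∫ a, f a ∂ν - f a0 * g b0 := by
        simp_rw [e]
        have Is : Integrable (fun a => f a0 * g a + g b0 * f a) ν :=
          (Ig.const_mul _).add (If.const_mul _)
        rw [integral_sub Is (integrable_const _),
          integral_add (Ig.const_mul _) (If.const_mul _), integral_const_mul, integral_const_mul]
        simp
      have f1 : f a0 ≤ ∫ a, f a ∂ν := by
        have := integral_mono (integrable_const (f a0)) If (fun b => mf a0 b ha0)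
        simpa using this
      have g1 : g b0 ≤ ∫ a, g a ∂ν := by
        have := integral_mono (integrable_const (g b0)) Ig (fun b => mg b0 b hb0)
        simpa using this
      rw [e2]
      nlinarith [mul_nonneg (sub_nonneg.2 f1) (sub_nonneg.2 g1)]
    · push Not at h2
      have : f = fun _ => f 0 := funext fun a => le_antisymm (mf _ _ (h2 _)) (mf _ _ (h2 _))
      rw [this]
      simp [integral_const_mul]
  · push Not at h1
    have : g = fun _ => g 0 := funext fun a => le_antisymm (mg _ _ (h1 _)) (mg _ _ (h1 _))
    rw [this]
    simp [integral_mul_const]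

lemma integral_sample_succ (P : PMF ℕ) (n : ℕ) (F : (Fin (n + 1) → ℕ) → ℝ)
    (hF : ∃ B, ∀ a, |F a| ≤ B) :
    ∫ ω, F ω ∂(sampleMeasure P (n + 1)) =
      ∫ a, (∫ ω, F (Fin.cons a ω) ∂(sampleMeasure P n)) ∂P.toMeasure := by
  have mp := (measurePreserving_piFinSuccAbove (fun _ : Fin (n + 1) => P.toMeasure) 0).symm
  have h := mp.integral_comp' (g := F)
  unfold sampleMeasure at *
  rw [← h]
  rw [integral_prod]
  · simp [MeasurableEquiv.piFinSuccAbove, Fin.insertNthEquiv]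
  · obtain ⟨B, hB⟩ := hF
    exact integrable_of_bdd_s3 _ _ ⟨B, fun a => hB _⟩

lemma cov_pi (P : PMF ℕ) (A : Set ℕ) : ∀ (n : ℕ) (F G : (Fin n → ℕ) → ℝ)
    (_ : ∃ B, ∀ a, |F a| ≤ B) (_ : ∃ B, ∀ a, |G a| ≤ B)
    (_ : ∀ ω i a b, a ∉ A → F (Function.update ω i a) ≤ F (Function.update ω i b))
    (_ : ∀ ω i a b, a ∈ A → G (Function.update ω i a) ≤ G (Function.update ω i b)),
    ∫ ω, F ω * G ω ∂(sampleMeasure P n) ≤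
      (∫ ω, F ω ∂(sampleMeasure P n)) * ∫ ω, G ω ∂(sampleMeasure P n) := by
  intro n
  induction n with
  | zero =>
    intro F G _ _ _ _
    have h1 : F = fun _ => F default := funext fun a => congrArg F (Subsingleton.elim _ _)
    rw [h1]
    simp [integral_const_mul]
  | succ n ih =>
    intro F G hF hG mF mG
    obtain ⟨B, hB⟩ := hF
    obtain ⟨C, hC⟩ := hG
    have bi : ∀ (H : (Fin (n + 1) → ℕ) → ℝ) (D : ℝ), (∀ a, |H a| ≤ D) →
        ∀ a, |∫ ω, H (Fin.cons a ω) ∂(sampleMeasure P n)| ≤ D := by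
      intro H D hD a
      have := norm_integral_le_of_norm_le_const (μ := sampleMeasure P n)
        (f := fun ω => H (Fin.cons a ω)) (C := D) (Filter.Eventually.of_forall fun ω => hD _)
      simpa using this
    have up : ∀ (H : (Fin (n + 1) → ℕ) → ℝ) (D : ℝ), (∀ a, |H a| ≤ D) → ∀ a b,
        (∀ ω i, H (Function.update ω i a) ≤ H (Function.update ω i b)) →
        ∫ ω, H (Fin.cons a ω) ∂(sampleMeasure P n) ≤ ∫ ω, H (Fin.cons b ω) ∂(sampleMeasure P n) := by
      intro H D hD a b h
      refine integral_mono (integrable_of_bdd_s3 _ _ ⟨D, fun _ => hD _⟩)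
        (integrable_of_bdd_s3 _ _ ⟨D, fun _ => hD _⟩) (fun ω => ?_)
      have := h (Fin.cons a ω) 0
      simpa [Fin.update_cons_zero] using this
    rw [integral_sample_succ P n _ (bdd_mul ⟨B, hB⟩ ⟨C, hC⟩), integral_sample_succ P n F ⟨B, hB⟩,
      integral_sample_succ P n G ⟨C, hC⟩]
    refine le_trans ?_ (cov_one P.toMeasure A _ _ ⟨B, bi F B hB⟩ ⟨C, bi G C hC⟩ ?_ ?_)
    · have bFG := bdd_mul (f := F) (g := G) ⟨B, hB⟩ ⟨C, hC⟩
      obtain ⟨D, hD⟩ := bFG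
      refine integral_mono (integrable_of_bdd_s3 _ _ ⟨D, bi (fun ω => F ω * G ω) D hD⟩)
        (integrable_of_bdd_s3 _ _ (bdd_mul ⟨B, bi F B hB⟩ ⟨C, bi G C hC⟩)) (fun a => ?_)
      refine ih (fun ω => F (Fin.cons a ω)) (fun ω => G (Fin.cons a ω)) ⟨B, fun _ => hB _⟩
        ⟨C, fun _ => hC _⟩ ?_ ?_
      · intro ω i c d hc
        have := mF (Fin.cons a ω) i.succ c d hc
        simpa [Fin.cons_update] using this
      · intro ω i c d hc
        have := mG (Fin.cons a ω) i.succ c d hc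
        simpa [Fin.cons_update] using this
    · intro a b ha
      exact up F B hB a b fun ω i => mF ω i a b ha
    · intro a b ha
      exact up G C hC a b fun ω i => mG ω i a b ha

lemma freq_update_le {n : ℕ} (ω : Fin n → ℕ) (i : Fin n) (a b j : ℕ) (h : a ≠ j) :
    freq (Function.update ω i a) j ≤ freq (Function.update ω i b) j := by
  unfold freq
  refine Finset.card_le_card fun k hk => ?_
  simp only [Finset.mem_filter, Finset.mem_univ, true_and] at hk ⊢
  by_cases hki : k = i
  · subst hki
    simp at hk
    exact absurd hk h
  · simpa [Function.update_of_ne hki] using hk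

lemma prod_bdd {α : Type*} (g : ℕ → α → ℝ) (hg : ∀ j, ∃ B, ∀ y, |g j y| ≤ B) (J : Finset ℕ) :
    ∃ B, ∀ y, |∏ j ∈ J, g j y| ≤ B := by
  classical
  induction J using Finset.induction_on with
  | empty => exact ⟨1, by simp⟩
  | insert j J hj ih =>
    simp_rw [Finset.prod_insert hj]
    exact bdd_mul (hg j) ih

lemma na_prod (P : PMF ℕ) (n : ℕ) (g : ℕ → ℕ → ℝ) (g0 : ∀ j y, 0 ≤ g j y)
    (hg : ∀ j, ∃ B, ∀ y, |g j y| ≤ B)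
    (hm : (∀ j, Monotone (g j)) ∨ (∀ j, Antitone (g j))) (J : Finset ℕ) :
    ∫ ω, ∏ j ∈ J, g j (freq ω j) ∂(sampleMeasure P n) ≤
      ∏ j ∈ J, ∫ ω, g j (freq ω j) ∂(sampleMeasure P n) := by
  classical
  have hg' : ∀ j, ∃ B, ∀ ω : Fin n → ℕ, |g j (freq ω j)| ≤ B := fun j => by
    obtain ⟨B, hB⟩ := hg j
    exact ⟨B, fun _ => hB _⟩
  induction J using Finset.induction_on with
  | empty => simp
  | insert j J hj ih =>
    simp_rw [Finset.prod_insert hj]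
    have bG := prod_bdd (fun j (ω : Fin n → ℕ) => g j (freq ω j)) hg' J
    refine le_trans ?_ (mul_le_mul_of_nonneg_left ih (integral_nonneg fun _ => g0 _ _))
    rcases hm with hm | hm
    · refine cov_pi P {j} n (fun ω => g j (freq ω j)) (fun ω => ∏ j ∈ J, g j (freq ω j))
        (hg' j) bG ?_ ?_
      · intro ω i a b ha
        exact hm j (freq_update_le _ _ _ _ _ (by simpa using ha))
      · intro ω i a b ha
        refine Finset.prod_le_prod (fun _ _ => g0 _ _) fun k hk => hm k (freq_update_le _ _ _ _ _ ?_)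
        rintro rfl
        simp at ha
        exact hj (ha ▸ hk)
    · have := cov_pi P {j} n (fun ω => -g j (freq ω j)) (fun ω => -∏ j ∈ J, g j (freq ω j))
        (by simpa using hg' j) (by simpa using bG) ?_ ?_
      · simpa [integral_neg] using this
      · intro ω i a b ha
        exact neg_le_neg (hm j (freq_update_le _ _ _ _ _ (by simpa using ha)))
      · intro ω i a b ha
        refine neg_le_neg (Finset.prod_le_prod (fun _ _ => g0 _ _) fun k hk =>
          hm k (freq_update_le _ _ _ _ _ ?_))
        rintro rfl
        simp at ha
        exact hj (ha ▸ hk)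

/-- Probability that the count of `j` satisfies `K`. -/
def qProb (P : PMF ℕ) (n : ℕ) (K : ℕ → Prop) (j : ℕ) : ℝ :=
  (sampleMeasure P n).real {ω | K (freq ω j)}

lemma qProb_nonneg (P : PMF ℕ) (n : ℕ) (K : ℕ → Prop) (j : ℕ) : 0 ≤ qProb P n K j :=
  measureReal_nonneg

lemma mgf_one (P : PMF ℕ) (n : ℕ) (K : ℕ → Prop) [DecidablePred K] (j : ℕ) (t : ℝ) :
    ∫ ω, Real.exp (t * (if K (freq ω j) then 1 else 0)) ∂(sampleMeasure P n) ≤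
      Real.exp (qProb P n K j * (Real.exp t - 1)) := by
  have e : ∀ ω : Fin n → ℕ, Real.exp (t * (if K (freq ω j) then 1 else 0)) =
      1 + Set.indicator {ω : Fin n → ℕ | K (freq ω j)} (fun _ => Real.exp t - 1) ω := by
    intro ω
    by_cases h : K (freq ω j) <;> simp [h]
  simp_rw [e]
  rw [integral_add (integrable_const _)
    ((integrable_const _).indicator (MeasurableSet.of_discrete)),
    integral_indicator_const _ (MeasurableSet.of_discrete)]
  have := Real.add_one_le_exp (qProb P n K j * (Real.exp t - 1))
  simp only [integral_const, probReal_univ, smul_eq_mul, one_mul]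
  unfold qProb at *
  linarith

lemma mgf_fin_s3 (P : PMF ℕ) (n : ℕ) (K : ℕ → Prop) [DecidablePred K] (t : ℕ → ℝ)
    (hm : (∀ j, Monotone fun y => t j * (if K y then (1 : ℝ) else 0)) ∨
      (∀ j, Antitone fun y => t j * (if K y then (1 : ℝ) else 0))) (J : Finset ℕ) :
    ∫⁻ ω, ENNReal.ofReal (Real.exp (∑ j ∈ J, t j * (if K (freq ω j) then 1 else 0)))
      ∂(sampleMeasure P n) ≤
      ENNReal.ofReal (Real.exp (∑ j ∈ J, qProb P n K j * (Real.exp (t j) - 1))) := by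
  have bd : ∀ j, ∃ B, ∀ y, |Real.exp (t j * (if K y then (1 : ℝ) else 0))| ≤ B := by
    intro j
    refine ⟨Real.exp |t j|, fun y => ?_⟩
    rw [abs_of_pos (Real.exp_pos _), Real.exp_le_exp]
    split_ifs
    · simpa using le_abs_self _
    · simp
  have h := na_prod P n (fun j y => Real.exp (t j * (if K y then (1 : ℝ) else 0)))
    (fun _ _ => (Real.exp_pos _).le) bd
    (hm.imp (fun h j a b hab => Real.exp_le_exp.2 (h j hab))
      (fun h j a b hab => Real.exp_le_exp.2 (h j hab))) J
  rw [← ofReal_integral_eq_lintegral_ofReal]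
  · refine ENNReal.ofReal_le_ofReal ?_
    simp_rw [Real.exp_sum]
    refine h.trans (Finset.prod_le_prod (fun _ _ => integral_nonneg fun _ => (Real.exp_pos _).le)
      fun j _ => mgf_one P n K j (t j))
  · simp_rw [Real.exp_sum]
    refine integrable_of_bdd_s3 _ _ (prod_bdd
      (fun j (ω : Fin n → ℕ) => Real.exp (t j * (if K (freq ω j) then 1 else 0))) ?_ J)
    intro j
    obtain ⟨B, hB⟩ := bd j
    exact ⟨B, fun _ => hB _⟩
  · exact Filter.Eventually.of_forall fun _ => (Real.exp_pos _).le

lemma mgf_inf_s3 (P : PMF ℕ) (n : ℕ) (K : ℕ → Prop) [DecidablePred K] (t : ℕ → ℝ)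
    (hm : (∀ j, Monotone fun y => t j * (if K y then (1 : ℝ) else 0)) ∨
      (∀ j, Antitone fun y => t j * (if K y then (1 : ℝ) else 0)))
    (hs : ∀ ω : Fin n → ℕ, Summable fun j => t j * (if K (freq ω j) then (1 : ℝ) else 0))
    (hq : Summable fun j => qProb P n K j * (Real.exp (t j) - 1)) :
    ∫⁻ ω, ENNReal.ofReal (Real.exp (∑' j, t j * (if K (freq ω j) then 1 else 0)))
      ∂(sampleMeasure P n) ≤
      ENNReal.ofReal (Real.exp (∑' j, qProb P n K j * (Real.exp (t j) - 1))) := by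
  have h1 : ∀ ω : Fin n → ℕ, ENNReal.ofReal (Real.exp (∑' j, t j * (if K (freq ω j) then 1 else 0)))
      = liminf (fun N : ℕ => ENNReal.ofReal (Real.exp (∑ j ∈ Finset.range N,
        t j * (if K (freq ω j) then 1 else 0)))) atTop := by
    intro ω
    refine (Filter.Tendsto.liminf_eq ?_).symm
    exact (ENNReal.continuous_ofReal.tendsto _).comp
      ((Real.continuous_exp.tendsto _).comp (hs ω).hasSum.tendsto_sum_nat)
  have h2 : ENNReal.ofReal (Real.exp (∑' j, qProb P n K j * (Real.exp (t j) - 1)))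
      = liminf (fun N : ℕ => ENNReal.ofReal (Real.exp (∑ j ∈ Finset.range N,
        qProb P n K j * (Real.exp (t j) - 1)))) atTop := by
    refine (Filter.Tendsto.liminf_eq ?_).symm
    exact (ENNReal.continuous_ofReal.tendsto _).comp
      ((Real.continuous_exp.tendsto _).comp hq.hasSum.tendsto_sum_nat)
  simp_rw [h1]
  rw [h2]
  refine (lintegral_liminf_le fun N => Measurable.of_discrete).trans ?_
  exact liminf_le_liminf (Filter.Eventually.of_forall fun N => mgf_fin_s3 P n K t hm _)

lemma chernoff (P : PMF ℕ) (n : ℕ) (K : ℕ → Prop) [DecidablePred K] (t : ℕ → ℝ)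
    (hm : (∀ j, Monotone fun y => t j * (if K y then (1 : ℝ) else 0)) ∨
      (∀ j, Antitone fun y => t j * (if K y then (1 : ℝ) else 0)))
    (hs : ∀ ω : Fin n → ℕ, Summable fun j => t j * (if K (freq ω j) then (1 : ℝ) else 0))
    (hq : Summable fun j => qProb P n K j * (Real.exp (t j) - 1)) (x : ℝ) :
    sampleMeasure P n {ω | (∑' j, qProb P n K j * (Real.exp (t j) - 1)) + x ≤
      ∑' j, t j * (if K (freq ω j) then (1 : ℝ) else 0)} ≤ ENNReal.ofReal (Real.exp (-x)) := by
  set A := ∑' j, qProb P n K j * (Real.exp (t j) - 1) with hA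
  have h := mgf_inf_s3 P n K t hm hs hq
  rw [← hA] at h
  have mk := mul_meas_ge_le_lintegral₀ (μ := sampleMeasure P n)
    (f := fun ω => ENNReal.ofReal (Real.exp (∑' j, t j * (if K (freq ω j) then 1 else 0))))
    (Measurable.of_discrete.aemeasurable) (ENNReal.ofReal (Real.exp (A + x)))
  have e : {ω : Fin n → ℕ | A + x ≤ ∑' j, t j * (if K (freq ω j) then (1 : ℝ) else 0)} =
    {ω | ENNReal.ofReal (Real.exp (A + x)) ≤
      ENNReal.ofReal (Real.exp (∑' j, t j * (if K (freq ω j) then 1 else 0)))} := by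
    ext ω
    simp only [Set.mem_ofPred_eq]
    rw [ENNReal.ofReal_le_ofReal_iff (Real.exp_pos _).le, Real.exp_le_exp]
  rw [e]
  have h3 := mk.trans h
  have hpos : ENNReal.ofReal (Real.exp (A + x)) ≠ 0 := by
    simp [Real.exp_pos]
  rw [mul_comm, ← ENNReal.le_div_iff_mul_le (Or.inl hpos) (Or.inl ENNReal.ofReal_ne_top)] at h3
  refine h3.trans (le_of_eq ?_)
  rw [← ENNReal.ofReal_div_of_pos (Real.exp_pos _), ← Real.exp_sub]
  congr 2
  ring

lemma exp_upper {u : ℝ} (h0 : 0 ≤ u) (h1 : u < 1) :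
    Real.exp u - 1 ≤ u + u ^ 2 / (2 * (1 - u)) := by
  have h := Real.exp_bound' h0 h1.le (n := 3) (by norm_num)
  simp [Finset.sum_range_succ, Nat.factorial] at h
  have h2 : u ^ 2 * (1 + u) / 2 ≤ u ^ 2 / (2 * (1 - u)) := by
    rw [div_le_div_iff₀ (by norm_num) (by linarith)]
    nlinarith [pow_nonneg h0 4]
  nlinarith [pow_nonneg h0 3]

lemma exp_lower {u : ℝ} (h0 : 0 ≤ u) : Real.exp (-u) - 1 ≤ -u + u ^ 2 / 2 := by
  have h := Real.quadratic_le_exp_of_nonneg h0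
  have h1 : Real.exp (-u) * Real.exp u = 1 := by rw [← Real.exp_add]; simp
  have h2 : 0 ≤ 1 - u + u ^ 2 / 2 := by nlinarith [sq_nonneg (u - 1)]
  have h3 : 1 ≤ (1 - u + u ^ 2 / 2) * Real.exp u := by
    refine le_trans ?_ (mul_le_mul_of_nonneg_left h h2)
    nlinarith [pow_nonneg h0 4]
  have h4 : Real.exp (-u) * Real.exp u ≤ (1 - u + u ^ 2 / 2) * Real.exp u := by rw [h1]; exact h3
  have := le_of_mul_le_mul_right h4 (Real.exp_pos u)
  linarith

/-- Bernstein upper tail for weighted sums. -/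
lemma bern_tail (P : PMF ℕ) (n : ℕ) (K : ℕ → Prop) [DecidablePred K] (w : ℕ → ℝ) (b v A x : ℝ)
    (hK : Monotone (fun y => if K y then (1 : ℝ) else 0) ∨
      Antitone (fun y => if K y then (1 : ℝ) else 0))
    (hw : ∀ j, 0 ≤ w j) (hwb : ∀ j, w j ≤ b) (hb : 0 < b) (hv : 0 < v) (hx : 0 < x)
    (hs : ∀ ω : Fin n → ℕ, Summable fun j => w j * (if K (freq ω j) then (1 : ℝ) else 0))
    (sA : Summable fun j => qProb P n K j * w j) (hA : ∑' j, qProb P n K j * w j ≤ A)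
    (sv : Summable fun j => qProb P n K j * w j ^ 2) (hv' : ∑' j, qProb P n K j * w j ^ 2 ≤ v) :
    sampleMeasure P n {ω | A + √(2 * v * x) + b * x ≤
      ∑' j, w j * (if K (freq ω j) then (1 : ℝ) else 0)} ≤ ENNReal.ofReal (Real.exp (-x)) := by
  set s := √(2 * x / v) with hsdef
  have hs0 : 0 < s := Real.sqrt_pos.2 (by positivity)
  have hs2 : v * s ^ 2 = 2 * x := by
    rw [hsdef, Real.sq_sqrt (by positivity)]
    field_simp
  have hvs : √(2 * v * x) = v * s := by
    rw [Real.sqrt_eq_iff_mul_self_eq (by positivity) (by positivity)]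
    nlinarith
  set l := s / (1 + b * s) with hl
  have hl0 : 0 < l := by positivity
  have hlb : 1 - b * l = 1 / (1 + b * s) := by
    rw [hl]; field_simp; ring
  have hlb0 : 0 < 1 - b * l := by rw [hlb]; positivity
  have hmono : (∀ j, Monotone fun y => (l * w j) * (if K y then (1 : ℝ) else 0)) ∨
      (∀ j, Antitone fun y => (l * w j) * (if K y then (1 : ℝ) else 0)) :=
    hK.imp (fun h j a b hab => mul_le_mul_of_nonneg_left (h hab) (mul_nonneg hl0.le (hw j)))
      (fun h j a b hab => mul_le_mul_of_nonneg_left (h hab) (mul_nonneg hl0.le (hw j)))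
  have hpt : ∀ j, qProb P n K j * (Real.exp (l * w j) - 1) ≤
      l * (qProb P n K j * w j) + l ^ 2 / (2 * (1 - b * l)) * (qProb P n K j * w j ^ 2) := by
    intro j
    have h1 : l * w j ≤ b * l := by nlinarith [hwb j]
    have h2 := exp_upper (u := l * w j) (mul_nonneg hl0.le (hw j)) (by linarith)
    have h3 : (l * w j) ^ 2 / (2 * (1 - l * w j)) ≤ (l * w j) ^ 2 / (2 * (1 - b * l)) := by
      apply div_le_div_of_nonneg_left (by positivity) (by linarith) (by linarith)
    have h4 := mul_le_mul_of_nonneg_left (h2.trans (add_le_add_right h3 _)) (qProb_nonneg P n K j)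
    refine h4.trans (le_of_eq ?_)
    ring
  have sR := (sA.mul_left l).add (sv.mul_left (l ^ 2 / (2 * (1 - b * l))))
  have hq : Summable fun j => qProb P n K j * (Real.exp (l * w j) - 1) :=
    Summable.of_nonneg_of_le (fun j => mul_nonneg (qProb_nonneg _ _ _ _)
      (sub_nonneg.2 (Real.one_le_exp (mul_nonneg hl0.le (hw j))))) hpt sR
  have hsum : ∑' j, qProb P n K j * (Real.exp (l * w j) - 1) ≤
      l * A + l ^ 2 / (2 * (1 - b * l)) * v := by
    refine (hq.tsum_le_tsum hpt sR).trans ?_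
    rw [(sA.mul_left l).tsum_add (sv.mul_left _), tsum_mul_left, tsum_mul_left]
    gcongr
  have hs' : ∀ ω : Fin n → ℕ,
      Summable fun j => l * w j * (if K (freq ω j) then (1 : ℝ) else 0) := by
    intro ω
    simpa [mul_assoc] using (hs ω).mul_left l
  refine le_trans (measure_mono ?_) (chernoff P n K (fun j => l * w j) hmono hs' hq x)
  intro ω hω
  simp only [Set.mem_ofPred_eq] at hω ⊢
  simp_rw [mul_assoc]
  rw [tsum_mul_left]
  refine le_trans ?_ (mul_le_mul_of_nonneg_left hω hl0.le)
  refine (add_le_add_left hsum x).trans (le_of_eq ?_)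
  rw [mul_assoc] at hvs
  rw [hlb, hl]
  have : √(2 * v * x) = v * s := by rw [mul_assoc]; exact hvs
  rw [this]
  have hx' : x = v * s ^ 2 / 2 := by linarith
  rw [hx']
  field_simp
  ring

/-- Lower tail for counts. -/
lemma lower_tail (P : PMF ℕ) (n : ℕ) (K : ℕ → Prop) [DecidablePred K] (x : ℝ)
    (hK : Monotone (fun y => if K y then (1 : ℝ) else 0)) (hx : 0 < x)
    (hs : ∀ ω : Fin n → ℕ, Summable fun j => (if K (freq ω j) then (1 : ℝ) else 0))
    (sA : Summable fun j => qProb P n K j) (hN : 0 < ∑' j, qProb P n K j) :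
    sampleMeasure P n {ω | (∑' j, (if K (freq ω j) then (1 : ℝ) else 0)) ≤
      (∑' j, qProb P n K j) - √(2 * (∑' j, qProb P n K j) * x)}
      ≤ ENNReal.ofReal (Real.exp (-x)) := by
  set v := ∑' j, qProb P n K j with hvdef
  set s := √(2 * x / v) with hsdef
  have hs0 : 0 < s := Real.sqrt_pos.2 (by positivity)
  have hs2 : v * s ^ 2 = 2 * x := by
    rw [hsdef, Real.sq_sqrt (by positivity)]
    field_simp
  have hvs : √(2 * v * x) = v * s := by
    rw [Real.sqrt_eq_iff_mul_self_eq (by positivity) (by positivity)]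
    nlinarith
  have hmono : (∀ _ : ℕ, Antitone fun y => (-s) * (if K y then (1 : ℝ) else 0)) := by
    intro _ a b hab
    have := hK hab
    simp only at this ⊢
    nlinarith
  have hq : Summable fun j => qProb P n K j * (Real.exp (-s) - 1) := sA.mul_right _
  refine le_trans (measure_mono ?_) (chernoff P n K (fun _ => -s) (Or.inr hmono)
    (fun ω => (hs ω).mul_left _) hq x)
  intro ω hω
  simp only [Set.mem_ofPred_eq] at hω ⊢
  rw [tsum_mul_left, tsum_mul_right, ← hvdef]
  rw [hvs] at hω
  have h1 := mul_le_mul_of_nonneg_left (exp_lower hs0.le) hN.le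
  have h2 := mul_le_mul_of_nonneg_left hω hs0.le
  nlinarith

lemma pReal_hasSum (P : PMF ℕ) : HasSum (pReal P) 1 := by
  have h := P.tsum_coe
  have hs : Summable (pReal P) := ENNReal.summable_toReal (by rw [h]; exact ENNReal.one_ne_top)
  have h2 : ∑' j, pReal P j = 1 := by
    unfold pReal
    rw [← ENNReal.tsum_toReal_eq (fun a => P.apply_ne_top a), h]
    simp
  rw [← h2]
  exact hs.hasSum

lemma qProb_eq (P : PMF ℕ) (n k j : ℕ) :
    qProb P n (fun y => y = k) j =
      (n.choose k : ℝ) * (pReal P j ^ k * (1 - pReal P j) ^ (n - k)) := by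
  classical
  unfold qProb
  have e : {ω : Fin n → ℕ | freq ω j = k} =
      ⋃ S ∈ Finset.powersetCard k (Finset.univ : Finset (Fin n)),
        {ω : Fin n → ℕ | (Finset.univ.filter fun i => ω i = j) = S} := by
    ext ω
    simp [freq, Finset.mem_powersetCard]
  have hS : ∀ S ∈ Finset.powersetCard k (Finset.univ : Finset (Fin n)),
      (sampleMeasure P n).real {ω : Fin n → ℕ | (Finset.univ.filter fun i => ω i = j) = S} =
        pReal P j ^ k * (1 - pReal P j) ^ (n - k) := by
    intro S hS
    have hc : S.card = k := (Finset.mem_powersetCard.1 hS).2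
    have e2 : {ω : Fin n → ℕ | (Finset.univ.filter fun i => ω i = j) = S} =
        Set.pi Set.univ (fun i => if i ∈ S then {j} else {j}ᶜ) := by
      ext ω
      simp only [Set.mem_ofPred_eq, Finset.ext_iff, Finset.mem_filter, Finset.mem_univ, true_and,
        Set.mem_pi, Set.mem_univ, forall_true_left]
      refine forall_congr' fun i => ?_
      by_cases h : i ∈ S <;> simp [h]
    rw [e2, measureReal_def, sampleMeasure, Measure.pi_pi, ENNReal.toReal_prod]
    have e3 : ∀ i, (P.toMeasure (if i ∈ S then {j} else {j}ᶜ)).toReal =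
        if i ∈ S then pReal P j else 1 - pReal P j := by
      intro i
      have h1 : (P.toMeasure {j}) = P j := P.toMeasure_apply_singleton j (measurableSet_singleton j)
      split_ifs
      · rw [h1]; rfl
      · rw [prob_compl_eq_one_sub (measurableSet_singleton j), h1,
          ENNReal.toReal_sub_of_le (P.coe_le_one j) ENNReal.one_ne_top]
        rfl
    simp_rw [e3]
    rw [Finset.prod_ite, Finset.prod_const, Finset.prod_const]
    have c1 : (Finset.univ.filter fun i => i ∈ S).card = k := by simp [hc]
    have c2 : (Finset.univ.filter fun i => ¬ i ∈ S).card = n - k := by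
      rw [← Finset.compl_filter, Finset.card_compl, c1]; simp
    rw [c1, c2]
  rw [e, measureReal_biUnion_finset, Finset.sum_congr rfl hS]
  · simp
  · intro S _ T _ hST
    rw [Function.onFun, Set.disjoint_left]
    intro ω h1 h2
    exact hST (h1.symm.trans h2)
  · intro S _
    exact MeasurableSet.of_discrete

lemma qProb_zero (P : PMF ℕ) (n j : ℕ) :
    qProb P n (fun y => y = 0) j = (1 - pReal P j) ^ n := by
  rw [qProb_eq]; simp

lemma qProb_mono (P : PMF ℕ) (n : ℕ) (K K' : ℕ → Prop) (h : ∀ y, K y → K' y) (j : ℕ) :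
    qProb P n K j ≤ qProb P n K' j :=
  measureReal_mono (fun _ hω => h _ hω)

lemma qProb_succ (P : PMF ℕ) (n r j : ℕ) :
    qProb P n (fun y => r ≤ y) j =
      qProb P n (fun y => y = r) j + qProb P n (fun y => r + 1 ≤ y) j := by
  unfold qProb
  rw [← measureReal_union]
  · congr 1
    ext ω
    simp only [Set.mem_ofPred_eq, Set.mem_union]
    omega
  · rw [Set.disjoint_left]
    intro ω h1 h2
    simp only [Set.mem_ofPred_eq] at h1 h2
    omega
  · exact MeasurableSet.of_discrete

lemma qProb_ge_le (P : PMF ℕ) (n r j : ℕ) (hr : 1 ≤ r) :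
    qProb P n (fun y => r ≤ y) j ≤ n * pReal P j := by
  refine (qProb_mono P n _ (fun y => 0 + 1 ≤ y) (fun y hy => by omega) j).trans ?_
  have h := qProb_succ P n 0 j
  have h1 : qProb P n (fun y => 0 ≤ y) j = 1 := by simp [qProb]
  rw [h1, qProb_zero] at h
  have := one_add_mul_le_pow (a := -pReal P j) (by linarith [pReal_le_one P j]) n
  rw [← sub_eq_add_neg] at this
  linarith

lemma qProb_ge_summable (P : PMF ℕ) (n r : ℕ) (hr : 1 ≤ r) :
    Summable (qProb P n (fun y => r ≤ y)) :=
  Summable.of_nonneg_of_le (fun j => qProb_nonneg _ _ _ j) (fun j => qProb_ge_le P n r j hr)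
    ((pReal_hasSum P).summable.mul_left _)

lemma qProb_ge_pos (P : PMF ℕ) (n r : ℕ) (hr : 1 ≤ r) (hn : r ≤ n) :
    0 < ∑' j, qProb P n (fun y => r ≤ y) j := by
  obtain ⟨j, hj⟩ : ∃ j, 0 < pReal P j := by
    by_contra! h
    have h0 : pReal P = fun _ => 0 := funext fun j => le_antisymm (h j) (pReal_nonneg P j)
    have := pReal_hasSum P
    rw [h0] at this
    exact zero_ne_one (hasSum_zero.unique this)
  refine (qProb_ge_summable P n r hr).tsum_pos (fun j => qProb_nonneg _ _ _ j) j ?_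
  refine lt_of_lt_of_le ?_ (qProb_mono P n (fun y => y = n) _ (fun y hy => by omega) j)
  rw [qProb_eq]
  simp
  positivity

lemma count_summable {n : ℕ} (ω : Fin n → ℕ) (K : ℕ → Prop) [DecidablePred K] (hK : ¬ K 0) :
    Summable fun j => (if K (freq ω j) then (1 : ℝ) else 0) := by
  refine summable_of_ne_finset_zero (s := Finset.univ.image ω) fun j hj => ?_
  have : freq ω j = 0 := by
    unfold freq
    rw [Finset.card_eq_zero, Finset.filter_eq_empty_iff]
    intro i _ h
    exact hj (h ▸ Finset.mem_image_of_mem _ (Finset.mem_univ _))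
  simp [this, hK]

lemma mono_ge (r : ℕ) : Monotone (fun y : ℕ => if r ≤ y then (1 : ℝ) else 0) := by
  intro a b hab
  by_cases h : r ≤ a
  · simp [h, h.trans hab]
  · simp only [h, if_false]; split_ifs <;> norm_num

lemma anti_zero : Antitone (fun y : ℕ => if y = 0 then (1 : ℝ) else 0) := by
  intro a b hab
  by_cases h : b = 0
  · have : a = 0 := by omega
    simp [h, this]
  · simp only [h, if_false]; split_ifs <;> norm_num

lemma pow_le_self (P : PMF ℕ) (r j : ℕ) (hr : 1 ≤ r) : pReal P j ^ r ≤ pReal P j := by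
  have := pow_le_pow_of_le_one (pReal_nonneg P j) (pReal_le_one P j) hr
  simpa using this

lemma mm_summable (P : PMF ℕ) (r : ℕ) (hr : 1 ≤ r) {n : ℕ} (ω : Fin n → ℕ) :
    Summable fun j => pReal P j ^ r * (if freq ω j = 0 then (1 : ℝ) else 0) := by
  refine Summable.of_nonneg_of_le (fun j => ?_) (fun j => ?_) (pReal_hasSum P).summable
  · have := pReal_nonneg P j
    positivity
  · have := pow_le_self P r j hr
    have := pReal_nonneg P j
    split_ifs <;> simp <;> assumption

lemma mm_le_one (P : PMF ℕ) (r : ℕ) (hr : 1 ≤ r) {n : ℕ} (ω : Fin n → ℕ) :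
    missingMass (pReal P) r ω ≤ 1 := by
  rw [← (pReal_hasSum P).tsum_eq]
  refine (mm_summable P r hr ω).tsum_le_tsum (fun j => ?_) (pReal_hasSum P).summable
  have := pow_le_self P r j hr
  have := pReal_nonneg P j
  split_ifs <;> simp <;> assumption

lemma M_eq {n : ℕ} (ω : Fin n → ℕ) (r : ℕ) (hr : 1 ≤ r) :
    Mcount ω r = Ccount ω r - Ccount ω (r + 1) := by
  unfold Mcount Ccount
  rw [← (count_summable ω (fun y => r ≤ y) (by omega)).tsum_sub
    (count_summable ω (fun y => r + 1 ≤ y) (by omega))]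
  refine tsum_congr fun j => ?_
  rcases lt_trichotomy (freq ω j) r with h | h | h
  · simp [h.ne, not_le.2 h, show ¬ r + 1 ≤ freq ω j by omega]
  · simp [h]
  · simp [h.ne', h.le, show r + 1 ≤ freq ω j by omega]

lemma trunc_event (P : PMF ℕ) (n : ℕ) (hn : 3 ≤ n) (x : ℝ) (hx : 0 < x) :
    sampleMeasure P n {ω | ∃ j, (x + Real.log n) / n ≤ pReal P j ∧ freq ω j = 0} ≤
      ENNReal.ofReal (Real.exp (-x)) := by
  set a := (x + Real.log n) / n with ha
  have hn0 : (0 : ℝ) < n := by positivity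
  have hn3 : (3 : ℝ) ≤ n := by exact_mod_cast hn
  have hlog : 1 ≤ x + Real.log n := by
    have : 1 ≤ Real.log n := by
      rw [Real.le_log_iff_exp_le hn0]
      linarith [Real.exp_one_lt_d9]
    linarith
  have ha0 : 0 < a := by positivity
  have hna : n * a = x + Real.log n := by rw [ha]; field_simp
  have hexp : Real.exp (-(n * a)) = Real.exp (-x) / n := by
    rw [hna, neg_add, Real.exp_add, Real.exp_neg (Real.log n), Real.exp_log hn0]
    rfl
  have h1 : {ω : Fin n → ℕ | ∃ j, a ≤ pReal P j ∧ freq ω j = 0} ⊆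
      ⋃ j, {ω | a ≤ pReal P j ∧ freq ω j = 0} := by
    rintro ω ⟨j, hj⟩
    exact Set.mem_iUnion.2 ⟨j, hj⟩
  refine (measure_mono h1).trans ((measure_iUnion_le _).trans ?_)
  have h2 : ∀ j, sampleMeasure P n {ω | a ≤ pReal P j ∧ freq ω j = 0} ≤
      ENNReal.ofReal (Real.exp (-x) * pReal P j) := by
    intro j
    by_cases hj : a ≤ pReal P j
    · simp only [hj, true_and]
      have hq := qProb_zero P n j
      unfold qProb at hq
      rw [← ofReal_measureReal, hq]
      refine ENNReal.ofReal_le_ofReal ?_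
      have e1 : (1 - pReal P j) ^ n ≤ Real.exp (-(n * a)) := by
        have : 1 - pReal P j ≤ Real.exp (-a) :=
          le_trans (by linarith) (Real.one_sub_le_exp_neg a)
        refine (pow_le_pow_left₀ (by linarith [pReal_le_one P j]) this n).trans (le_of_eq ?_)
        rw [← Real.exp_nat_mul]
        congr 1
        ring
      refine e1.trans ?_
      rw [hexp, div_eq_mul_inv]
      refine mul_le_mul_of_nonneg_left ?_ (Real.exp_pos _).le
      refine le_trans ?_ hj
      rw [ha, ← one_div]
      gcongr
    · simp [hj]
  refine (ENNReal.tsum_le_tsum h2).trans ?_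
  rw [← ENNReal.ofReal_tsum_of_nonneg (fun j => mul_nonneg (Real.exp_pos _).le (pReal_nonneg P j))
    ((pReal_hasSum P).summable.mul_left _), tsum_mul_left, (pReal_hasSum P).tsum_eq, mul_one]

/-- Deterministic combination of the four good events. -/
lemma combine (N N' C C' θ c m b x : ℝ) (r : ℕ) (hr : 1 ≤ r) (hN : 0 ≤ N) (hC : 0 ≤ C)
    (hc : 0 < c) (hm : 0 < m)
    (hb : 0 ≤ b) (hx : 0 < x) (h1 : N - √(2 * N * x) ≤ C) (h2 : C' ≤ N' + √(2 * N * x) + 1 * x)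
    (h3 : θ ≤ (N - N') / c + √(2 * (N / m) * x) + b * x) :
    θ ≤ (C - C') / c + (√(2 / m) + 2 * √2 / c) * √(C * x) +
      (4 / √m + (26 / 3) / c) * x + b * (2 ^ (r + 1) * x / 3) := by
  have s2 : √2 * √2 = 2 := Real.mul_self_sqrt (by norm_num)
  have s20 : 0 ≤ √2 := Real.sqrt_nonneg _
  set y := √(N * x) with hy
  set z := √(C * x) with hz
  have hy0 : 0 ≤ y := Real.sqrt_nonneg _
  have hz0 : 0 ≤ z := Real.sqrt_nonneg _
  have hy2 : y * y = N * x := Real.mul_self_sqrt (by positivity)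
  have hz2 : z * z = C * x := Real.mul_self_sqrt (by positivity)
  have e1 : √(2 * N * x) = √2 * y := by rw [mul_assoc, Real.sqrt_mul (by norm_num)]
  have e2 : √(2 * (N / m) * x) = √(2 / m) * y := by
    rw [hy, ← Real.sqrt_mul (by positivity)]
    congr 1
    field_simp
  have e3 : √(2 / m) = √2 / √m := Real.sqrt_div (by norm_num) _
  rw [e1] at h1 h2
  rw [e2, e3] at h3
  rw [e3]
  have hm' : 0 < √m := Real.sqrt_pos.2 hm
  -- the key comparison
  have key : y ≤ z + √2 * x := by
    by_contra! h
    have hxx : N * x - √2 * y * x ≤ C * x := by nlinarith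
    have : y * (y - √2 * x) ≤ z * z := by nlinarith
    have hsx : 0 < √2 * x := by positivity
    have : y * z ≤ y * (y - √2 * x) := mul_le_mul_of_nonneg_left (by linarith) hy0
    nlinarith
  have k1 : √2 / √m * y ≤ √2 / √m * z + 4 / √m * x := by
    have : √2 / √m * y ≤ √2 / √m * (z + √2 * x) := mul_le_mul_of_nonneg_left key (by positivity)
    refine this.trans ?_
    have e : √2 / √m * (z + √2 * x) = √2 / √m * z + (√2 * √2) / √m * x := by ring
    rw [e, s2]
    have : 2 / √m * x ≤ 4 / √m * x := by gcongr; norm_num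
    linarith
  have k2 : (N - N') / c ≤ (C - C') / c + 2 * √2 / c * z + (26 / 3) / c * x := by
    have : N - N' ≤ (C - C') + 2 * √2 * z + 26 / 3 * x := by nlinarith
    have h := div_le_div_of_nonneg_right this hc.le
    refine h.trans (le_of_eq ?_)
    ring
  have k3 : b * x ≤ b * (2 ^ (r + 1) * x / 3) := by
    have : (2 : ℝ) ^ 2 ≤ 2 ^ (r + 1) := pow_le_pow_right₀ (by norm_num) (by omega)
    refine mul_le_mul_of_nonneg_left ?_ hb
    nlinarith
  linarith

/-- Upper confidence bound for the `r`-order missing mass: with probability at least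
`1 - 7 e^{-x}`, we have `θ_r(P;X_n) ≤ min(𝔘_{n,r}(x), 1)`. -/
theorem missingMass_confidence_upper (P : PMF ℕ) (r n : ℕ) (hr : 1 ≤ r) (hn : 2 * r < n)
    (x : ℝ) (hx : 0 < x) :
    1 - ENNReal.ofReal (7 * Real.exp (-x)) ≤
      sampleMeasure P n
        {ω | missingMass (pReal P) r ω ≤ min (Ubound r x ω) 1} := by
  classical
  have hrn : r ≤ n := by omega
  set a : ℝ := (x + Real.log n) / n with ha
  have hn1 : (1 : ℝ) ≤ n := by exact_mod_cast (by omega : 1 ≤ n)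
  have hlog : 0 ≤ Real.log n := Real.log_nonneg hn1
  have ha0 : 0 < a := by positivity
  set N := ∑' j, qProb P n (fun y => r ≤ y) j with hNdef
  set N' := ∑' j, qProb P n (fun y => r + 1 ≤ y) j with hNdef'
  have sN := qProb_ge_summable P n r hr
  have sN' := qProb_ge_summable P n (r + 1) (by omega)
  have hN : 0 < N := qProb_ge_pos P n r hr hrn
  have hNN : N' ≤ N := sN'.tsum_le_tsum (fun j => qProb_mono P n _ _ (fun y hy => by omega) j) sN
  have hc : (0 : ℝ) < n.choose r := by exact_mod_cast Nat.choose_pos hrn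
  have hm : (0 : ℝ) < n.choose (2 * r) := by exact_mod_cast Nat.choose_pos hn.le
  -- the pointwise comparison of the moments
  have pt : ∀ k j, k ≤ n → pReal P j ^ k * (1 - pReal P j) ^ n ≤
      qProb P n (fun y => y = k) j / n.choose k := by
    intro k j hk
    have hck : (0 : ℝ) < n.choose k := by exact_mod_cast Nat.choose_pos hk
    rw [qProb_eq, mul_div_cancel_left₀ _ hck.ne']
    have h0 := pReal_nonneg P j
    have h1 := pReal_le_one P j
    exact mul_le_mul_of_nonneg_left
      (pow_le_pow_of_le_one (by linarith) (by linarith) (by omega)) (by positivity)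
  -- truncated weights
  let w : ℕ → ℝ := fun j => if a ≤ pReal P j then 0 else pReal P j ^ r
  have hw : ∀ j, 0 ≤ w j := fun j => by
    have := pReal_nonneg P j
    simp only [w]; split_ifs <;> positivity
  have hwp : ∀ j, w j ≤ pReal P j ^ r := fun j => by
    have := pReal_nonneg P j
    simp only [w]; split_ifs
    · positivity
    · exact le_rfl
  have hwb : ∀ j, w j ≤ a ^ r := fun j => by
    have := pReal_nonneg P j
    simp only [w]; split_ifs with h
    · positivity
    · exact pow_le_pow_left₀ this (not_le.1 h).le r
  have sw : ∀ ω : Fin n → ℕ, Summable fun j => w j * (if freq ω j = 0 then (1 : ℝ) else 0) := by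
    intro ω
    refine Summable.of_nonneg_of_le (fun j => ?_) (fun j => ?_) (mm_summable P r hr ω)
    · have := hw j
      positivity
    · exact mul_le_mul_of_nonneg_right (hwp j) (by positivity)
  have b1 : ∀ j, qProb P n (fun y => y = 0) j * w j ≤
      (qProb P n (fun y => r ≤ y) j - qProb P n (fun y => r + 1 ≤ y) j) / n.choose r := by
    intro j
    have h := qProb_succ P n r j
    have h2 := pt r j hrn
    have h3 := mul_le_mul_of_nonneg_left (hwp j) (qProb_nonneg P n (fun y => y = 0) j)
    refine h3.trans ?_
    rw [qProb_zero, h, add_sub_cancel_right, mul_comm]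
    exact h2
  have b2 : ∀ j, qProb P n (fun y => y = 0) j * w j ^ 2 ≤
      qProb P n (fun y => r ≤ y) j / n.choose (2 * r) := by
    intro j
    have h2 := pt (2 * r) j hn.le
    have h3 := mul_le_mul_of_nonneg_left (pow_le_pow_left₀ (hw j) (hwp j) 2)
      (qProb_nonneg P n (fun y => y = 0) j)
    refine h3.trans ?_
    rw [qProb_zero, ← pow_mul, mul_comm r 2, mul_comm]
    refine h2.trans (div_le_div_of_nonneg_right ?_ hm.le)
    exact qProb_mono P n _ _ (fun y hy => by omega) j
  have sd := (sN.sub sN').div_const (n.choose r : ℝ)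
  have sA : Summable fun j => qProb P n (fun y => y = 0) j * w j :=
    Summable.of_nonneg_of_le (fun j => mul_nonneg (qProb_nonneg _ _ _ _) (hw j)) b1 sd
  have hA : ∑' j, qProb P n (fun y => y = 0) j * w j ≤ (N - N') / n.choose r := by
    refine (sA.tsum_le_tsum b1 sd).trans (le_of_eq ?_)
    rw [tsum_div_const, sN.tsum_sub sN']
  have sv : Summable fun j => qProb P n (fun y => y = 0) j * w j ^ 2 :=
    Summable.of_nonneg_of_le (fun j => mul_nonneg (qProb_nonneg _ _ _ _) (sq_nonneg _)) b2
      (sN.div_const _)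
  have hv : ∑' j, qProb P n (fun y => y = 0) j * w j ^ 2 ≤ N / n.choose (2 * r) := by
    refine (sv.tsum_le_tsum b2 (sN.div_const _)).trans (le_of_eq ?_)
    rw [tsum_div_const]
  -- the four bad events
  have E1 := lower_tail P n (fun y => r ≤ y) x (mono_ge r) hx
    (fun ω => count_summable ω _ (by omega)) sN hN
  have E2 := bern_tail P n (fun y => r + 1 ≤ y) (fun _ => 1) 1 N N' x (Or.inl (mono_ge (r + 1)))
    (fun _ => zero_le_one) (fun _ => le_rfl) one_pos hN hx
    (fun ω => by simpa only [one_mul] using count_summable ω (fun y => r + 1 ≤ y) (by omega))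
    (by simpa only [mul_one] using sN') (by simp only [mul_one]; exact le_rfl)
    (by simpa only [one_pow, mul_one] using sN') (by simp only [one_pow, mul_one]; exact hNN)
  have E3 := bern_tail P n (fun y => y = 0) w (a ^ r) (N / n.choose (2 * r))
    ((N - N') / n.choose r) x (Or.inr anti_zero) hw hwb (by positivity) (by positivity) hx sw
    sA hA sv hv
  have E4 := trunc_event P n (by omega) x hx
  rw [← ha] at E4
  rw [← hNdef] at E1
  simp only [one_mul] at E2
  set B1 := {ω : Fin n → ℕ | (∑' j, (if r ≤ freq ω j then (1 : ℝ) else 0)) ≤ N - √(2 * N * x)}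
  set B2 := {ω : Fin n → ℕ | N' + √(2 * N * x) + x ≤
    ∑' j, (if r + 1 ≤ freq ω j then (1 : ℝ) else 0)}
  set B3 := {ω : Fin n → ℕ | (N - N') / n.choose r + √(2 * (N / n.choose (2 * r)) * x) + a ^ r * x ≤
    ∑' j, w j * (if freq ω j = 0 then (1 : ℝ) else 0)}
  set B4 := {ω : Fin n → ℕ | ∃ j, a ≤ pReal P j ∧ freq ω j = 0}
  set G := {ω : Fin n → ℕ | missingMass (pReal P) r ω ≤ min (Ubound r x ω) 1}
  have cover : (Set.univ : Set (Fin n → ℕ)) ⊆ G ∪ (B1 ∪ B2 ∪ B3 ∪ B4) := by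
    intro ω _
    by_contra hω
    simp only [Set.mem_union, not_or] at hω
    obtain ⟨hG, ⟨⟨h1, h2⟩, h3⟩, h4⟩ := hω
    apply hG
    simp only [B1, B2, B3, B4, Set.mem_ofPred_eq, not_le, not_exists, not_and] at h1 h2 h3 h4
    refine le_min ?_ (mm_le_one P r hr ω)
    have hθ : ∑' j, w j * (if freq ω j = 0 then (1 : ℝ) else 0) = missingMass (pReal P) r ω := by
      unfold missingMass
      refine tsum_congr fun j => ?_
      by_cases hj : a ≤ pReal P j
      · simp [h4 j hj]
      · simp [w, hj]
    rw [hθ] at h3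
    have hC0 : 0 ≤ Ccount ω r := tsum_nonneg fun j => by positivity
    have := combine N N' (Ccount ω r) (Ccount ω (r + 1)) (missingMass (pReal P) r ω)
      (n.choose r) (n.choose (2 * r)) (a ^ r) x r hr hN.le hC0 hc hm (by positivity) hx
      h1.le (by rw [one_mul]; exact h2.le) h3.le
    rw [← M_eq ω r hr] at this
    exact this
  have hB : sampleMeasure P n (B1 ∪ B2 ∪ B3 ∪ B4) ≤ ENNReal.ofReal (7 * Real.exp (-x)) := by
    have e0 := (Real.exp_pos (-x)).le
    calc sampleMeasure P n (B1 ∪ B2 ∪ B3 ∪ B4)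
        ≤ sampleMeasure P n B1 + sampleMeasure P n B2 + sampleMeasure P n B3
            + sampleMeasure P n B4 :=
          (measure_union_le _ _).trans (add_le_add_left ((measure_union_le _ _).trans
            (add_le_add_left (measure_union_le _ _) _)) _)
      _ ≤ ENNReal.ofReal (Real.exp (-x)) + ENNReal.ofReal (Real.exp (-x))
            + ENNReal.ofReal (Real.exp (-x)) + ENNReal.ofReal (Real.exp (-x)) :=
          add_le_add (add_le_add (add_le_add E1 E2) E3) E4
      _ = ENNReal.ofReal (4 * Real.exp (-x)) := by
          rw [← ENNReal.ofReal_add e0 e0, ← ENNReal.ofReal_add (by positivity) e0,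
            ← ENNReal.ofReal_add (by positivity) e0]
          congr 1
          ring
      _ ≤ ENNReal.ofReal (7 * Real.exp (-x)) := ENNReal.ofReal_le_ofReal (by linarith)
  rw [tsub_le_iff_right]
  calc (1 : ENNReal) = sampleMeasure P n Set.univ := measure_univ.symm
    _ ≤ sampleMeasure P n (G ∪ (B1 ∪ B2 ∪ B3 ∪ B4)) := measure_mono cover
    _ ≤ sampleMeasure P n G + sampleMeasure P n (B1 ∪ B2 ∪ B3 ∪ B4) := measure_union_le _ _
    _ ≤ _ := add_le_add le_rfl hB

end
end
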